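/- arXiv:1612.06726 — 2 statements merged into one kernel-verified Lean document; each statement's English description precedes it below -/
import Mathlib

section
/- Let I ⊆ S be a graded ideal whose quotient S/I admits a finite graded free resolution with alternating Betti sums B_j(I), and let t ≥ 1. Let φ: P^n → P^n be a morphism given by n+1 forms of degree t without common zero, and let I_t denote the ideal obtained by substituting these forms (pullback of a free resolution of S/I gives a free resolution of S/I_t). Then B_j(I_t) = 0 if t does not divide j, and B_{tj}(I_t) = B_j(I). -/
/-!
Write `A = ℂ[f_0, …, f_n]`. The `f_i` generate an ideal primary to the irrelevant ideal, so by the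
Cohen–Macaulay property of `S` the ring `S` is free over `A`, and `A` is itself a polynomial ring.
A basis is given by finitely many monomials `x ^ e α` whose classes form a `ℂ`-basis of `S/(f)`.
Therefore, with `V = ∑ X ^ |e α|`, the Hilbert series of an ideal and of its pullback satisfy
`H(I_t)(X) = V(X) * H(I)(X ^ t)`; this includes `I = S`, where it reads `T(X) = V(X) * T(X ^ t)`
for the Hilbert series `T` of `S`. On the other hand the Euler characteristic of a graded free
resolution gives `T - H(I) = B * T` with `B = ∑ B_j X ^ j`. Combining,
`B' * T = V * (T - H(I))(X ^ t) = V * B(X ^ t) * T(X ^ t) = B(X ^ t) * T`,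
and cancelling `T ≠ 0` gives `B'(X) = B(X ^ t)`.

The linear independence of the basis over `A` (`coeffs_eq_zero_of_aeval`) is proved without
dimension theory. The variables are a regular sequence of length `n + 1`, and an exchange argument
(`DepthGE.exchange`) moves this regular sequence, by prime avoidance in linear systems
(`exists_regMod`), into the `ℂ`-span of the `f_i`. Elements independent modulo a regular sequence
`g` are independent over `ℂ[g]` (`RegSeq.coeffs_eq_zero`). Applied to the element `1`, this shows
that the `n + 1` members of `g` are linearly independent, so `g` and `f` have the same span. The
graded spanning statement (`exists_graded_coeffs`) is the graded Nakayama lemma.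
-/

open MvPolynomial Module Finset DirectSum

/-- The polynomial ring `ℂ[x_0, …, x_n]`. -/
abbrev S (n : ℕ) := MvPolynomial (Fin (n + 1)) ℂ

/-- The ideal `I` is homogeneous: it contains all homogeneous components of its elements. -/
def IsHomogeneousIdeal {n : ℕ} (I : Ideal (S n)) : Prop :=
  ∀ f ∈ I, ∀ k : ℕ, homogeneousComponent k f ∈ I

/-- The degree-`k` graded piece of `S/I`, realized as the image of the homogeneous
polynomials of degree `k` in the quotient ring. -/
noncomputable def quotPiece {n : ℕ} (I : Ideal (S n)) (k : ℕ) :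
    Submodule ℂ (S n ⧸ I) :=
  (homogeneousSubmodule (Fin (n + 1)) ℂ k).map (Ideal.Quotient.mkₐ ℂ I).toLinearMap

/-- The Hilbert function `h_{S/I}(k) = dim_ℂ (S/I)_k`. -/
noncomputable def hilb {n : ℕ} (I : Ideal (S n)) (k : ℕ) : ℕ :=
  finrank ℂ (quotPiece I k)

/-- The degree-`k` graded piece of the graded free module `F_i = ⊕_j S(-j)^{β_{i,j}}`,
namely `⊕_{j ≤ k} (S_{k-j})^{β_{i,j}}` (terms with `j > k` vanish). -/
noncomputable abbrev freePiece (n : ℕ) (β : ℕ → ℕ → ℕ) (i k : ℕ) :=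
  DirectSum (Fin (k + 1)) fun j => (Fin (β i (j : ℕ)) → homogeneousSubmodule (Fin (n + 1)) ℂ (k - (j : ℕ)))

/-- A degreewise incarnation of a graded free resolution
`0 → F_s → ⋯ → F_0 → S/I → 0` with `F_i = ⊕_j S(-j)^{β_{i,j}}` finitely generated:
for every degree `k` there are linear maps forming an exact sequence of the degree-`k`
pieces. (We take `β i j = 0` for `i > s`, so the chain is eventually zero.) -/
def IsDegreewiseFreeResolution (n s : ℕ) (β : ℕ → ℕ → ℕ) (I : Ideal (S n)) : Prop :=
  (∀ i j, s < i → β i j = 0) ∧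
  ∀ k : ℕ, ∃ (d : ∀ i : ℕ, freePiece n β (i + 1) k →ₗ[ℂ] freePiece n β i k)
    (ε : freePiece n β 0 k →ₗ[ℂ] quotPiece I k),
      Function.Surjective ε ∧ Function.Exact (d 0) ε ∧
      ∀ i : ℕ, Function.Exact (d (i + 1)) (d i)

/-! ### Regular sequences in linear systems -/

/-- `x` is a nonzerodivisor on `R ⧸ J`, phrased inside `R`. As for all notions below, `J = R` is
not excluded. -/
def RegMod {R : Type*} [CommRing R] (J : Ideal R) (x : R) : Prop :=
  ∀ a, x * a ∈ J → a ∈ J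

/-- `(R ⧸ J)` contains no nonzero element killed by `m`. -/
def SocleFree {R : Type*} [CommRing R] (m J : Ideal R) : Prop :=
  ∀ u, (∀ x ∈ m, x * u ∈ J) → u ∈ J

/-- `R ⧸ J` admits a (weakly) regular sequence of length `r` with all terms in `m`. -/
def DepthGE {R : Type*} [CommRing R] (m : Ideal R) : ℕ → Ideal R → Prop
  | 0, _ => True
  | r + 1, J => ∃ x ∈ m, RegMod J x ∧ DepthGE m r (J ⊔ Ideal.span {x})

/-- The family `g` is a (weakly) regular sequence on `R ⧸ J`. -/
def RegSeq {R : Type*} [CommRing R] : (r : ℕ) → (Fin r → R) → Ideal R → Prop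
  | 0, _, _ => True
  | r + 1, g, J => RegMod J (g 0) ∧ RegSeq r (Fin.tail g) (J ⊔ Ideal.span {g 0})

lemma mem_sup_span_iff {R : Type*} [CommRing R] {J : Ideal R} {x a : R} :
    a ∈ J ⊔ Ideal.span {x} ↔ ∃ j ∈ J, ∃ b, a = j + x * b := by
  simp only [Submodule.mem_sup, Ideal.mem_span_singleton']
  constructor
  · rintro ⟨j, hj, _, ⟨b, rfl⟩, rfl⟩
    exact ⟨j, hj, b, by ring⟩
  · rintro ⟨j, hj, b, rfl⟩
    exact ⟨j, hj, _, ⟨b, rfl⟩, by ring⟩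

lemma RegMod.socleFree {R : Type*} [CommRing R] {m J : Ideal R} {x : R} (hx : RegMod J x)
    (hm : x ∈ m) : SocleFree m J :=
  fun u hu => hx u (hu x hm)

/-- Prime avoidance over `ℂ`: a linear system `W` whose base locus is contained in `V(m)`
contains an element that is regular modulo each of finitely many socle-free ideals. -/
lemma exists_regMod {R : Type*} [CommRing R] [Algebra ℂ R] [IsNoetherianRing R] {m : Ideal R}
    (W : Submodule ℂ R) (hW : ∀ P : Ideal R, P.IsPrime → (W : Set R) ⊆ P → m ≤ P)
    (Js : Set (Ideal R)) (hfin : Js.Finite) (hJs : ∀ J ∈ Js, SocleFree m J) :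
    ∃ c ∈ W, ∀ J ∈ Js, RegMod J c := by
  set T : Set (Ideal R) := ⋃ J ∈ Js, associatedPrimes R (R ⧸ J) with hT
  have hTfin : T.Finite := hfin.biUnion fun J _ => associatedPrimes.finite R (R ⧸ J)
  have hTm : ∀ P ∈ T, ¬ m ≤ P := by
    intro P hP hmP
    simp only [hT, Set.mem_iUnion] at hP
    obtain ⟨J, hJ, hP⟩ := hP
    rw [AssociatedPrimes.mem_iff, isAssociatedPrime_iff] at hP
    obtain ⟨hprime, x, rfl⟩ := hP
    obtain ⟨u, rfl⟩ := Ideal.Quotient.mk_surjective x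
    have hu : u ∈ J := hJs J hJ u fun y hy => by
      have := hmP hy
      rw [Submodule.mem_colon_singleton, Submodule.mem_bot] at this
      rw [← Ideal.Quotient.eq_zero_iff_mem, map_mul]
      exact this
    apply hprime.ne_top
    rw [Ideal.eq_top_iff_one, Submodule.mem_colon_singleton, Submodule.mem_bot,
      Ideal.Quotient.eq_zero_iff_mem.mpr hu, smul_zero]
  have : Finite T := hTfin
  -- A vector space over an infinite field is not a finite union of proper subspaces.
  have hcov : (⋃ P : T, ((P.1.restrictScalars ℂ).comap W.subtype : Set W)) ≠ Set.univ := by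
    intro h
    obtain ⟨P, hP⟩ := Subspace.exists_eq_top_of_iUnion_eq_univ h
    refine hTm P.1 P.2 (hW P.1 ?_ ?_)
    · have := P.2
      simp only [hT, Set.mem_iUnion] at this
      obtain ⟨J, _, h⟩ := this
      exact h.isPrime
    · intro w hw
      have : (⟨w, hw⟩ : W) ∈ (P.1.restrictScalars ℂ).comap W.subtype := hP ▸ trivial
      simpa using this
  obtain ⟨c, hc⟩ := (Set.ne_univ_iff_exists_notMem _).mp hcov
  refine ⟨c, c.2, fun J hJ a ha => ?_⟩
  by_contra haJ
  have hmem : (c : R) ∈ ⋃ p ∈ associatedPrimes R (R ⧸ J), (p : Set R) := by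
    rw [biUnion_associatedPrimes_eq_zero_divisors]
    refine ⟨Ideal.Quotient.mk J a, fun h => haJ (Ideal.Quotient.eq_zero_iff_mem.mp h), ?_⟩
    exact Ideal.Quotient.eq_zero_iff_mem.mpr ha
  simp only [Set.mem_iUnion] at hmem
  obtain ⟨P, hP, hcP⟩ := hmem
  apply hc
  simp only [Set.mem_iUnion]
  exact ⟨⟨P, by simp only [hT, Set.mem_iUnion]; exact ⟨J, hJ, hP⟩⟩, hcP⟩

/-- If `x, z` is a regular sequence on `R ⧸ J`, then `x` is regular modulo `(J, z)`. (That `z` is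
regular modulo `J` can fail without a local or graded hypothesis.) -/
lemma RegMod.swap {R : Type*} [CommRing R] {J : Ideal R} {x z : R} (hx : RegMod J x)
    (hz : RegMod (J ⊔ Ideal.span {x}) z) : RegMod (J ⊔ Ideal.span {z}) x := by
  intro a ha
  obtain ⟨j, hj, b, hab⟩ := mem_sup_span_iff.mp ha
  have hb : b ∈ J ⊔ Ideal.span {x} :=
    hz b (mem_sup_span_iff.mpr ⟨-j, J.neg_mem hj, a, by linear_combination -hab⟩)
  obtain ⟨j', hj', c, rfl⟩ := mem_sup_span_iff.mp hb
  have h1 : a - z * c ∈ J := hx _ (by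
    have : x * (a - z * c) = j + z * j' := by linear_combination hab
    rw [this]
    exact J.add_mem hj (J.mul_mem_left _ hj'))
  exact mem_sup_span_iff.mpr ⟨_, h1, c, by ring⟩

/-- The socles of `R ⧸ (J, x)` and `R ⧸ (J, y)` are isomorphic for regular `x`, `y`;
here only their simultaneous vanishing is recorded. -/
lemma SocleFree.exchange {R : Type*} [CommRing R] {m J : Ideal R} {x y : R}
    (hxm : x ∈ m) (hx : RegMod J x) (hy : RegMod J y)
    (h : SocleFree m (J ⊔ Ideal.span {x})) : SocleFree m (J ⊔ Ideal.span {y}) := by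
  intro u hu
  obtain ⟨j, hj, v, hv⟩ := mem_sup_span_iff.mp (hu x hxm)
  have hvJ : v ∈ J ⊔ Ideal.span {x} := h v fun w hw => by
    obtain ⟨j', hj', b, hb⟩ := mem_sup_span_iff.mp (hu w hw)
    have h1 : w * v - x * b ∈ J := hy _ (by
      have : y * (w * v - x * b) = x * j' - w * j := by linear_combination (-w) * hv + x * hb
      rw [this]
      exact J.sub_mem (J.mul_mem_left _ hj') (J.mul_mem_left _ hj))
    exact mem_sup_span_iff.mpr ⟨_, h1, b, by ring⟩
  obtain ⟨j'', hj'', c, rfl⟩ := mem_sup_span_iff.mp hvJ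
  have h2 : u - y * c ∈ J := hx _ (by
    have : x * (u - y * c) = j + y * j'' := by linear_combination hv
    rw [this]
    exact J.add_mem hj (J.mul_mem_left _ hj''))
  exact mem_sup_span_iff.mpr ⟨_, h2, c, by ring⟩

lemma DepthGE.socleFree {R : Type*} [CommRing R] {m J : Ideal R} {r : ℕ}
    (h : DepthGE m (r + 1) J) : SocleFree m J := by
  obtain ⟨x, hxm, hx, -⟩ := h
  exact hx.socleFree hxm

/-- Depth drops by at most one modulo any regular element `y` of `m`. If `x` begins a given long
regular sequence, the element `z` of `W` is chosen regular modulo both `(J, x)` and `(J, y)`;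
replacing `x` by `z` and then `z` by `y` uses only the exchange property in smaller length. -/
lemma DepthGE.exchange {R : Type*} [CommRing R] [Algebra ℂ R] [IsNoetherianRing R] {m : Ideal R}
    (W : Submodule ℂ R) (hWm : (W : Set R) ⊆ m)
    (hW : ∀ P : Ideal R, P.IsPrime → (W : Set R) ⊆ P → m ≤ P) (r : ℕ) :
    ∀ J : Ideal R, DepthGE m (r + 1) J → ∀ y ∈ m, RegMod J y →
      DepthGE m r (J ⊔ Ideal.span {y}) := by
  induction r with
  | zero => intros; trivial
  | succ r ih =>
    intro J hJ y hym hy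
    obtain ⟨x, hxm, hx, hJx⟩ := hJ
    have hsx : SocleFree m (J ⊔ Ideal.span {x}) := hJx.socleFree
    have hsy : SocleFree m (J ⊔ Ideal.span {y}) := hsx.exchange hxm hx hy
    obtain ⟨z, hzW, hz⟩ := exists_regMod W hW {J ⊔ Ideal.span {x}, J ⊔ Ideal.span {y}}
      (by simp) (by rintro _ (rfl | rfl) <;> assumption)
    have hzx := hz (J ⊔ Ideal.span {x}) (by simp)
    have hzy := hz (J ⊔ Ideal.span {y}) (by simp)
    have hzm := hWm hzW
    have h1 : DepthGE m (r + 1) (J ⊔ Ideal.span {z}) := by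
      refine ⟨x, hxm, hx.swap hzx, ?_⟩
      rw [sup_right_comm]
      exact ih _ hJx z hzm hzx
    refine ⟨z, hzm, hzy, ?_⟩
    rw [sup_right_comm]
    exact ih _ h1 y hym (hy.swap hzy)

/-- A regular sequence of any length bounded by the depth can be chosen inside any linear system
`W ⊆ m` that cuts out `V(m)`. -/
lemma DepthGE.exists_regSeq {R : Type*} [CommRing R] [Algebra ℂ R] [IsNoetherianRing R]
    {m : Ideal R} (W : Submodule ℂ R) (hWm : (W : Set R) ⊆ m)
    (hW : ∀ P : Ideal R, P.IsPrime → (W : Set R) ⊆ P → m ≤ P) (r : ℕ) :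
    ∀ J : Ideal R, DepthGE m r J → ∃ g : Fin r → R, (∀ i, g i ∈ W) ∧ RegSeq r g J := by
  induction r with
  | zero => intro J _; exact ⟨Fin.elim0, fun i => i.elim0, trivial⟩
  | succ r ih =>
    intro J hJ
    obtain ⟨c, hcW, hc⟩ := exists_regMod W hW {J} (by simp)
      (by rintro _ rfl; exact hJ.socleFree)
    have hc := hc J rfl
    obtain ⟨g, hgW, hg⟩ := ih _ (DepthGE.exchange W hWm hW r J hJ c (hWm hcW) hc)
    refine ⟨Fin.cons c g, Fin.cases (by simpa) (by simpa), ?_⟩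
    simp only [RegSeq, Fin.cons_zero, Fin.tail_cons]
    exact ⟨hc, hg⟩

lemma eval₂_finSuccEquiv {R : Type*} [CommRing R] [Algebra ℂ R] {r : ℕ} (g : Fin (r + 1) → R)
    (p : MvPolynomial (Fin (r + 1)) ℂ) :
    Polynomial.eval₂RingHom (aeval (Fin.tail g) : MvPolynomial (Fin r) ℂ →ₐ[ℂ] R).toRingHom (g 0)
      (finSuccEquiv ℂ r p) = aeval g p := by
  suffices h : (Polynomial.eval₂RingHom
      (aeval (Fin.tail g) : MvPolynomial (Fin r) ℂ →ₐ[ℂ] R).toRingHom (g 0)).comp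
      (finSuccEquiv ℂ r : MvPolynomial (Fin (r + 1)) ℂ →+* _) =
        (aeval g : MvPolynomial (Fin (r + 1)) ℂ →ₐ[ℂ] R) from RingHom.congr_fun h p
  apply MvPolynomial.ringHom_ext
  · intro a
    simp [finSuccEquiv_apply, Algebra.algebraMap_eq_smul_one]
  · intro i
    refine Fin.cases ?_ (fun j => ?_) i
    · simp [finSuccEquiv_X_zero]
    · simp [finSuccEquiv_X_succ, Fin.tail]

/-- A regular sequence is algebraically independent in a strong sense: elements whose images in
`R ⧸ (J, g)` are linearly independent over `ℂ` remain linearly independent over `ℂ[g]`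
modulo `J`. -/
lemma RegSeq.coeffs_eq_zero {R : Type*} [CommRing R] [Algebra ℂ R] {κ : Type*} [Fintype κ]
    (v : κ → R) (r : ℕ) : ∀ (g : Fin r → R) (J : Ideal R), RegSeq r g J →
    (∀ c : κ → ℂ, ∑ α, c α • v α ∈ J ⊔ Ideal.span (Set.range g) → c = 0) →
    ∀ P : κ → MvPolynomial (Fin r) ℂ, ∑ α, aeval g (P α) * v α ∈ J → P = 0 := by
  induction r with
  | zero =>
    intro g J _ hv P hP
    have hPC : ∀ α, P α = C (coeff 0 (P α)) := fun α => eq_C_of_isEmpty (P α)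
    have h := hv (fun α => coeff 0 (P α)) (Ideal.mem_sup_left (by
      convert hP using 2 with α
      rw [hPC α, Algebra.smul_def]
      simp))
    funext α
    rw [hPC α, congrFun h α]
    simp
  | succ r ih =>
    intro g J hg hv P hP
    obtain ⟨hg0, hg1⟩ := hg
    have hv' : ∀ c : κ → ℂ, ∑ α, c α • v α ∈
        (J ⊔ Ideal.span {g 0}) ⊔ Ideal.span (Set.range (Fin.tail g)) → c = 0 := by
      intro c hc
      refine hv c ?_
      rw [sup_assoc, ← Ideal.span_union, Set.singleton_union] at hc
      rwa [← Fin.range_cons, Fin.cons_self_tail] at hc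
    set φ : Polynomial (MvPolynomial (Fin r) ℂ) →+* R :=
      Polynomial.eval₂RingHom (aeval (Fin.tail g) : _ →ₐ[ℂ] R).toRingHom (g 0) with hφ
    have key : ∀ (k : ℕ) (Q : κ → Polynomial (MvPolynomial (Fin r) ℂ)),
        ∑ α, φ (Q α) * v α ∈ J → ∀ α, (Q α).coeff k = 0 := by
      -- Modulo `g 0` only the constant coefficients survive; they vanish by induction on the
      -- length, and then `g 0` can be divided out.
      have hsplit : ∀ Q : κ → Polynomial (MvPolynomial (Fin r) ℂ), ∑ α, φ (Q α) * v α =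
          g 0 * (∑ α, φ (Q α).divX * v α) + ∑ α, aeval (Fin.tail g) ((Q α).coeff 0) * v α := by
        intro Q
        rw [Finset.mul_sum, ← Finset.sum_add_distrib]
        refine Finset.sum_congr rfl fun α _ => ?_
        conv_lhs => rw [← Polynomial.divX_mul_X_add (Q α)]
        simp only [map_add, map_mul, hφ, Polynomial.coe_eval₂RingHom, Polynomial.eval₂_X,
          Polynomial.eval₂_C]
        simp only [AlgHom.toRingHom_eq_coe, RingHom.coe_coe]
        ring
      have h0 : ∀ Q : κ → Polynomial (MvPolynomial (Fin r) ℂ),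
          ∑ α, φ (Q α) * v α ∈ J → ∀ α, (Q α).coeff 0 = 0 := by
        intro Q hQ
        refine congrFun (ih (Fin.tail g) _ hg1 hv' (fun α => (Q α).coeff 0) ?_)
        exact mem_sup_span_iff.mpr ⟨_, hQ, -∑ α, φ (Q α).divX * v α, by rw [hsplit Q]; ring⟩
      intro k
      induction k with
      | zero => exact h0
      | succ k ihk =>
        intro Q hQ α
        have := h0 Q hQ
        rw [hsplit Q] at hQ
        simp only [this, map_zero, zero_mul, Finset.sum_const_zero, add_zero] at hQ
        rw [← Polynomial.coeff_divX]
        exact ihk (fun α => (Q α).divX) (hg0 _ hQ) α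
    have hfin : ∀ p, φ (finSuccEquiv ℂ r p) = aeval g p := eval₂_finSuccEquiv g
    funext α
    apply (finSuccEquiv ℂ r).injective
    rw [Pi.zero_apply, map_zero]
    ext1 k
    rw [Polynomial.coeff_zero]
    exact key k (fun α => finSuccEquiv ℂ r (P α)) (by simpa only [hfin] using hP) α

/-! ### Base-point-free forms and independence over the subalgebra they generate -/

/-- The variables form a regular sequence, so the irrelevant ideal has depth `n + 1`. -/
lemma depthGE_irrelevant (N : ℕ) :
    DepthGE (Ideal.span (Set.range (X : Fin N → MvPolynomial (Fin N) ℂ))) N ⊥ := by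
  have key : ∀ r k : ℕ, k + r = N →
      DepthGE (Ideal.span (Set.range (X : Fin N → MvPolynomial (Fin N) ℂ))) r
        (Ideal.span (X '' {i : Fin N | i.val < k})) := by
    intro r
    induction r with
    | zero => intros; trivial
    | succ r ih =>
      intro k hk
      have hkN : k < N := by omega
      refine ⟨X ⟨k, hkN⟩, Ideal.subset_span ⟨_, rfl⟩, ?_, ?_⟩
      · intro a ha
        rw [mem_ideal_span_X_image] at ha ⊢
        intro m hm
        obtain ⟨i, hi, hne⟩ := ha (Finsupp.single ⟨k, hkN⟩ 1 + m) (by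
          rw [MvPolynomial.mem_support_iff, coeff_X_mul]
          exact MvPolynomial.mem_support_iff.mp hm)
        refine ⟨i, hi, fun h0 => hne ?_⟩
        have : (⟨k, hkN⟩ : Fin N) ≠ i := by
          rintro rfl
          exact lt_irrefl k hi
        simp [h0, this]
      · have := ih (k + 1) (by omega)
        convert this using 1
        rw [← Ideal.span_union, ← Set.image_singleton, ← Set.image_union]
        congr 2
        ext i
        simp only [Set.mem_union, Set.mem_ofPred_eq, Set.mem_singleton_iff, Fin.ext_iff]
        omega
  have h := key N 0 (by omega)
  simpa using h

lemma X_mem_radical {n : ℕ} {f : Fin (n + 1) → S n}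
    (hbpf : ∀ x : Fin (n + 1) → ℂ, (∀ i, eval x (f i) = 0) → x = 0) (i : Fin (n + 1)) :
    (X i : S n) ∈ (Ideal.span (Set.range f)).radical := by
  rw [← vanishingIdeal_zeroLocus_eq_radical (K := ℂ), zeroLocus_span, mem_vanishingIdeal_iff]
  intro x hx
  have hx0 : x = 0 := hbpf x fun j => by
    have := hx (f j) ⟨j, rfl⟩
    rwa [aeval_eq_eval] at this
  simp [hx0]

lemma irrelevant_le_of_isPrime {n : ℕ} {f : Fin (n + 1) → S n}
    (hbpf : ∀ x : Fin (n + 1) → ℂ, (∀ i, eval x (f i) = 0) → x = 0) (P : Ideal (S n))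
    (hP : P.IsPrime) (hf : ∀ i, f i ∈ P) : Ideal.span (Set.range (X : Fin (n + 1) → S n)) ≤ P := by
  have h : Ideal.span (Set.range f) ≤ P := by
    rw [Ideal.span_le]
    rintro _ ⟨i, rfl⟩
    exact hf i
  rw [Ideal.span_le]
  rintro _ ⟨i, rfl⟩
  exact (hP.isRadical.radical_le_iff.mpr h) (X_mem_radical hbpf i)

lemma irrelevant_le_ker_eval_zero (n : ℕ) :
    Ideal.span (Set.range (X : Fin (n + 1) → S n)) ≤
      RingHom.ker (eval (0 : Fin (n + 1) → ℂ)) := by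
  rw [Ideal.span_le]
  rintro _ ⟨i, rfl⟩
  simp [RingHom.mem_ker]

lemma mem_irrelevant_of_isHomogeneous {n t : ℕ} (ht : 1 ≤ t) {p : S n} (hp : p.IsHomogeneous t) :
    p ∈ Ideal.span (Set.range (X : Fin (n + 1) → S n)) := by
  rw [← Set.image_univ, mem_ideal_span_X_image]
  intro m hm
  have hdeg := hp (MvPolynomial.mem_support_iff.mp hm)
  by_contra h
  push Not at h
  have : m = 0 := by ext i; exact h i trivial
  subst this
  simp at hdeg
  omega

/-- Monomials whose classes form a `ℂ`-basis of the finite-dimensional algebra `S/(f)`. -/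
lemma exists_monomial_basis {n : ℕ} {f : Fin (n + 1) → S n}
    (hbpf : ∀ x : Fin (n + 1) → ℂ, (∀ i, eval x (f i) = 0) → x = 0) :
    ∃ (κ : Type) (_ : Fintype κ) (e : κ → Fin (n + 1) →₀ ℕ),
      (∀ c : κ → ℂ, ∑ α, c α • (monomial (e α) 1 : S n) ∈ Ideal.span (Set.range f) → c = 0) ∧
      ∀ h : S n, ∃ c : κ → ℂ,
        h - ∑ α, c α • (monomial (e α) 1 : S n) ∈ Ideal.span (Set.range f) := by
  set J := Ideal.span (Set.range f) with hJ
  obtain ⟨κ, e, he, hspan, hli⟩ := exists_linearIndependent' ℂ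
    (fun m : Fin (n + 1) →₀ ℕ => Ideal.Quotient.mkₐ ℂ J (monomial m 1))
  choose N hN using fun i => X_mem_radical hbpf i
  have hfin : Finite κ := by
    have hlt : ∀ k, e k ∈ Set.Iic (Finsupp.equivFunOnFinite.symm N) := by
      intro k i
      by_contra! hlt
      apply hli.ne_zero k
      have h1 : (X i : S n) ^ N i ∣ monomial (e k) 1 := by
        rw [X_pow_eq_monomial, monomial_dvd_monomial]
        refine ⟨Or.inr ?_, one_dvd _⟩
        rw [Finsupp.single_le_iff]
        exact hlt.le
      exact Ideal.Quotient.eq_zero_iff_mem.mpr (J.mem_of_dvd h1 (hN i))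
    have := (Set.finite_Iic (Finsupp.equivFunOnFinite.symm N)).to_subtype
    exact Finite.of_injective (fun k => (⟨e k, hlt k⟩ : Set.Iic _))
      fun a b hab => he (congrArg Subtype.val hab)
  have := Fintype.ofFinite κ
  refine ⟨κ, this, e, ?_, ?_⟩
  · intro c hc
    funext k
    refine Fintype.linearIndependent_iff.mp hli c ?_ k
    have h0 : Ideal.Quotient.mkₐ ℂ J (∑ α, c α • (monomial (e α) 1 : S n)) = 0 :=
      Ideal.Quotient.eq_zero_iff_mem.mpr hc
    rw [map_sum] at h0
    simp only [map_smul] at h0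
    exact h0
  · intro h
    have hmem : Ideal.Quotient.mkₐ ℂ J h ∈ Submodule.span ℂ
        (Set.range ((fun m : Fin (n + 1) →₀ ℕ => Ideal.Quotient.mkₐ ℂ J (monomial m 1)) ∘ e)) := by
      rw [hspan]
      have : h = ∑ m ∈ h.support, coeff m h • monomial m 1 := by
        conv_lhs => rw [h.as_sum]
        simp [smul_monomial]
      rw [this, map_sum]
      refine Submodule.sum_mem _ fun m _ => ?_
      rw [map_smul]
      exact Submodule.smul_mem _ _ (Submodule.subset_span ⟨m, rfl⟩)
    obtain ⟨c, hc⟩ := (Submodule.mem_span_range_iff_exists_fun _).mp hmem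
    refine ⟨c, ?_⟩
    rw [← Ideal.Quotient.eq_zero_iff_mem, ← Ideal.Quotient.mkₐ_eq_mk ℂ, map_sub, map_sum, ← hc]
    simp

/-- An invertible linear change `g = b f` of the forms amounts to an invertible linear
substitution in the variables. -/
lemma exists_linear_change {n : ℕ} (f g : Fin (n + 1) → S n)
    (b : Fin (n + 1) → Fin (n + 1) → ℂ) (B : Matrix (Fin (n + 1)) (Fin (n + 1)) ℂ)
    (hB : B * Matrix.of b = 1) (hb : ∀ j, ∑ i, b j i • f i = g j) :
    ∃ ψ χ : S n →ₐ[ℂ] S n, (∀ p, ψ (χ p) = p) ∧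
      ∀ p : S n, (aeval g p : S n) = aeval f (ψ p) := by
  refine ⟨aeval fun j => ∑ i, b j i • X i, aeval fun j => ∑ i, B j i • X i, ?_, ?_⟩
  · intro p
    rw [← AlgHom.comp_apply]
    refine (DFunLike.congr_fun (?_ : _ = AlgHom.id ℂ (S n)) p)
    ext1 i
    simp only [AlgHom.comp_apply, aeval_X, map_sum, map_smul, AlgHom.id_apply,
      Finset.smul_sum, smul_smul]
    rw [Finset.sum_comm]
    simp_rw [← Finset.sum_smul]
    have : ∀ k, ∑ j, B i j * b j k = (1 : Matrix _ _ ℂ) i k := fun k => by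
      rw [← hB, Matrix.mul_apply]; rfl
    simp [this, Matrix.one_apply]
  · intro p
    rw [← AlgHom.comp_apply]
    refine DFunLike.congr_fun (?_ : (aeval g : S n →ₐ[ℂ] S n) = _) p
    ext1 j
    rw [AlgHom.comp_apply, aeval_X, aeval_X, ← hb j, map_sum]
    simp_rw [map_smul, aeval_X]

/-- Lifts of linearly independent elements of `S/(f)` stay linearly independent over `ℂ[f]`.
This is the Cohen–Macaulay property of `S`: general linear combinations `g` of the `f i` form
a regular sequence, and `ℂ[g] = ℂ[f]`. -/
lemma coeffs_eq_zero_of_aeval {n t : ℕ} (ht : 1 ≤ t) {f : Fin (n + 1) → S n}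
    (hf : ∀ i, (f i).IsHomogeneous t)
    (hbpf : ∀ x : Fin (n + 1) → ℂ, (∀ i, eval x (f i) = 0) → x = 0)
    {κ : Type*} [Fintype κ] (v : κ → S n)
    (hv : ∀ c : κ → ℂ, ∑ α, c α • v α ∈ Ideal.span (Set.range f) → c = 0)
    (P : κ → S n) (hP : ∑ α, aeval f (P α) * v α = 0) : P = 0 := by
  set W := Submodule.span ℂ (Set.range f) with hW
  have hWJ : ∀ w ∈ W, w ∈ Ideal.span (Set.range f) := fun w hw =>
    Submodule.span_subset_span ℂ (S n) _ hw
  have hJm : Ideal.span (Set.range f) ≤ Ideal.span (Set.range (X : Fin (n + 1) → S n)) := by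
    rw [Ideal.span_le]
    rintro _ ⟨i, rfl⟩
    exact mem_irrelevant_of_isHomogeneous ht (hf i)
  have hWm : (W : Set (S n)) ⊆ Ideal.span (Set.range (X : Fin (n + 1) → S n)) :=
    fun w hw => hJm (hWJ w hw)
  obtain ⟨g, hgW, hg⟩ := DepthGE.exists_regSeq W hWm
    (fun P hP hWP => irrelevant_le_of_isPrime hbpf P hP
      fun i => hWP (Submodule.subset_span ⟨i, rfl⟩)) (n + 1) ⊥ (depthGE_irrelevant (n + 1))
  have hgJ : Ideal.span (Set.range g) ≤ Ideal.span (Set.range f) := by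
    rw [Ideal.span_le]
    rintro _ ⟨i, rfl⟩
    exact hWJ _ (hgW i)
  choose b hb using fun j => (Submodule.mem_span_range_iff_exists_fun ℂ).mp (hgW j)
  -- The `g j` are linearly independent, since they are even algebraically independent.
  have hrow : LinearIndependent ℂ (Matrix.of b).row := by
    rw [Fintype.linearIndependent_iff]
    intro c hc
    have hsum : ∑ j, c j • g j = 0 := by
      have : ∀ i, ∑ j, c j * b j i = 0 := fun i => by
        have := congrFun hc i
        simpa [Finset.sum_apply] using this
      simp_rw [← hb, Finset.smul_sum, smul_smul]
      rw [Finset.sum_comm]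
      simp_rw [← Finset.sum_smul, this, zero_smul, Finset.sum_const_zero]
    have hQ := RegSeq.coeffs_eq_zero (fun _ : Unit => (1 : S n)) (n + 1) g ⊥ hg (by
      intro c hc
      rw [bot_sup_eq] at hc
      have h1 := irrelevant_le_ker_eval_zero n (hJm (hgJ hc))
      funext u
      simpa [RingHom.mem_ker, smul_eval] using h1) (fun _ => ∑ j, c j • X j) (by simpa using hsum)
    intro j
    have := congrArg (coeff (Finsupp.single j 1)) (congrFun hQ ())
    simpa [coeff_sum, coeff_X, Finsupp.single_left_inj] using this
  have hunit : IsUnit (Matrix.of b) := Matrix.linearIndependent_rows_iff_isUnit.mp hrow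
  obtain ⟨B, hB⟩ := hunit.exists_left_inv
  obtain ⟨ψ, χ, hψχ, hgψ⟩ := exists_linear_change f g b B hB hb
  have hQ := RegSeq.coeffs_eq_zero v (n + 1) g ⊥ hg
    (fun c hc => hv c (by rw [bot_sup_eq] at hc; exact hgJ hc)) (fun α => χ (P α)) (by
      simp only [hgψ, hψχ]
      exact hP)
  funext α
  rw [← hψχ (P α), congrFun hQ α, Pi.zero_apply, map_zero]

/-! ### Graded spanning over the subalgebra -/

/-- The degree-`k` piece of the graded `ℂ[x_0, …, x_n]`-module with one generator in degree `d`,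
when every variable is given degree `t`: the forms of degree `(k - d) / t` if this is a natural
number, and zero otherwise. -/
noncomputable def piece (n t d k : ℕ) : Submodule ℂ (S n) :=
  if d ≤ k ∧ t ∣ k - d then homogeneousSubmodule (Fin (n + 1)) ℂ ((k - d) / t) else ⊥

lemma X_mul_mem_piece {n t d k : ℕ} (ht : 1 ≤ t) (htk : t ≤ k) (i : Fin (n + 1)) {a : S n}
    (ha : a ∈ piece n t d (k - t)) : X i * a ∈ piece n t d k := by
  unfold piece at ha ⊢
  split_ifs at ha with h1
  · obtain ⟨h1, m, hm⟩ := h1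
    have hk : k - d = t * (m + 1) := by
      rw [mul_add, ← hm]; omega
    rw [if_pos ⟨by omega, m + 1, hk⟩, hk, Nat.mul_div_cancel_left _ ht]
    rw [hm, Nat.mul_div_cancel_left _ ht, mem_homogeneousSubmodule] at ha
    rw [mem_homogeneousSubmodule, add_comm m 1]
    exact (isHomogeneous_X ℂ i).mul ha
  · rw [Submodule.mem_bot] at ha
    rw [ha, mul_zero]
    exact Submodule.zero_mem _

lemma homogeneousComponent_mul_left {n t : ℕ} {f : S n} (hf : f.IsHomogeneous t) (p : S n)
    (k : ℕ) : homogeneousComponent k (f * p) =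
      if t ≤ k then f * homogeneousComponent (k - t) p else 0 := by
  conv_lhs => rw [← sum_homogeneousComponent p, mul_sum, map_sum]
  have key : ∀ i, homogeneousComponent k (f * homogeneousComponent i p) =
      if k = t + i then f * homogeneousComponent i p else 0 := fun i =>
    homogeneousComponent_of_mem (hf.mul (homogeneousComponent_isHomogeneous i p))
  simp only [key]
  split_ifs with h
  · rw [Finset.sum_eq_single (k - t)]
    · rw [if_pos (by omega)]
    · intro j _ hj
      rw [if_neg (by omega)]
    · intro hj
      rw [homogeneousComponent_eq_zero _ _ (by simp at hj; omega), mul_zero, ite_self]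
  · exact Finset.sum_eq_zero fun j _ => if_neg (by omega)

/-- The graded surjectivity half of freeness: every form of degree `k` is a combination of the
monomials `x ^ e α` with coefficients that are polynomials in the `f i`, of the expected degree. -/
lemma exists_graded_coeffs {n t : ℕ} (ht : 1 ≤ t) {f : Fin (n + 1) → S n}
    (hf : ∀ i, (f i).IsHomogeneous t) {κ : Type} [Fintype κ] (e : κ → Fin (n + 1) →₀ ℕ)
    (hspan : ∀ h : S n, ∃ c : κ → ℂ,
      h - ∑ α, c α • monomial (e α) 1 ∈ Ideal.span (Set.range f)) (k : ℕ) :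
    ∀ h : S n, h.IsHomogeneous k → ∃ a : κ → S n,
      (∀ α, a α ∈ piece n t (e α).degree k) ∧
        ∑ α, aeval f (a α) * monomial (e α) (1 : ℂ) = h := by
  induction k using Nat.strong_induction_on with
  | _ k ih =>
  intro h hh
  obtain ⟨c, hc⟩ := hspan h
  obtain ⟨p, hp⟩ := Ideal.mem_span_range_iff_exists_fun.mp hc
  have hcomp : h = ∑ α, (if k = (e α).degree then c α else 0) • monomial (e α) (1 : ℂ) +
      ∑ i, if t ≤ k then f i * homogeneousComponent (k - t) (p i) else 0 := by
    have h1 : h = ∑ α, c α • monomial (e α) (1 : ℂ) + ∑ i, f i * p i := by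
      simp only [mul_comm (f _), hp]; ring
    have h2 := congrArg (homogeneousComponent k) h1
    rw [homogeneousComponent_of_mem hh, if_pos rfl, map_add, map_sum, map_sum] at h2
    rw [h2]
    congr 1
    · refine Finset.sum_congr rfl fun α _ => ?_
      rw [map_smul, homogeneousComponent_of_mem
        (isHomogeneous_monomial (R := ℂ) 1 (rfl : (e α).degree = _))]
      split_ifs <;> simp
    · exact Finset.sum_congr rfl fun i _ => homogeneousComponent_mul_left (hf i) _ _
  have hconst : ∀ α, C (if k = (e α).degree then c α else 0) ∈ piece n t (e α).degree k := by
    intro α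
    split_ifs with hk
    · rw [piece, if_pos ⟨hk.ge, by simp [hk]⟩, mem_homogeneousSubmodule, ← hk, Nat.sub_self,
        Nat.zero_div]
      exact isHomogeneous_C _ _
    · rw [C_0]; exact Submodule.zero_mem _
  by_cases htk : t ≤ k
  · choose b hb hbs using fun i => ih (k - t) (by omega) (homogeneousComponent (k - t) (p i))
      (homogeneousComponent_isHomogeneous _ _)
    refine ⟨fun α => C (if k = (e α).degree then c α else 0) + ∑ i, X i * b i α, fun α =>
      Submodule.add_mem _ (hconst α) (Submodule.sum_mem _ fun i _ =>
        X_mul_mem_piece ht htk i (hb i α)), ?_⟩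
    conv_rhs => rw [hcomp]
    simp only [if_pos htk, map_add, map_sum, map_mul, aeval_X, aeval_C, add_mul,
      Finset.sum_add_distrib, Finset.sum_mul]
    congr 1
    · simp only [Algebra.smul_def]
    rw [Finset.sum_comm]
    refine Finset.sum_congr rfl fun i _ => ?_
    rw [← hbs i, Finset.mul_sum]
    simp only [mul_assoc]
  · refine ⟨fun α => C (if k = (e α).degree then c α else 0), hconst, ?_⟩
    conv_rhs => rw [hcomp]
    simp only [if_neg htk, Finset.sum_const_zero, add_zero, aeval_C,
      Algebra.smul_def]

/-! ### Dimensions of graded pieces of ideals -/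

/-- The degree-`k` piece of an ideal. -/
noncomputable def idealPiece {n : ℕ} (I : Ideal (S n)) (k : ℕ) : Submodule ℂ (S n) :=
  I.restrictScalars ℂ ⊓ homogeneousSubmodule (Fin (n + 1)) ℂ k

instance finite_homogeneousSubmodule (n k : ℕ) :
    Module.Finite ℂ (homogeneousSubmodule (Fin (n + 1)) ℂ k) :=
  Module.Finite.iff_fg.mpr (homogeneousSubmodule_fg (Fin (n + 1)) ℂ k)

lemma hilb_add_finrank_idealPiece {n : ℕ} (I : Ideal (S n)) (k : ℕ) :
    hilb I k + finrank ℂ (idealPiece I k) =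
      finrank ℂ (homogeneousSubmodule (Fin (n + 1)) ℂ k) := by
  rw [← LinearMap.finrank_range_add_finrank_ker
    ((Ideal.Quotient.mkₐ ℂ I).toLinearMap.domRestrict (homogeneousSubmodule (Fin (n + 1)) ℂ k)),
    LinearMap.range_domRestrict]
  congr 1
  have hle : idealPiece I k ≤ homogeneousSubmodule (Fin (n + 1)) ℂ k := inf_le_right
  rw [← (Submodule.comapSubtypeEquivOfLe hle).finrank_eq]
  congr! 2
  all_goals
    ext x
    simp [idealPiece, Ideal.Quotient.eq_zero_iff_mem]
    try exact fun _ => x.2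

lemma finrank_inf_piece {n : ℕ} (t d k : ℕ) (I : Ideal (S n)) :
    finrank ℂ (I.restrictScalars ℂ ⊓ piece n t d k : Submodule ℂ (S n)) =
      if d ≤ k ∧ t ∣ k - d then finrank ℂ (idealPiece I ((k - d) / t)) else 0 := by
  by_cases h : d ≤ k ∧ t ∣ k - d
  · rw [piece, if_pos h, if_pos h, idealPiece]
  · rw [piece, if_neg h, if_neg h, inf_bot_eq, finrank_bot]

lemma piece_le (n t d k : ℕ) :
    piece n t d k ≤ homogeneousSubmodule (Fin (n + 1)) ℂ ((k - d) / t) := by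
  unfold piece
  split_ifs
  · exact le_rfl
  · exact bot_le

lemma isHomogeneous_aeval_mul {n t : ℕ} {f : Fin (n + 1) → S n}
    (hf : ∀ i, (f i).IsHomogeneous t) (e : Fin (n + 1) →₀ ℕ) {k : ℕ} {a : S n}
    (ha : a ∈ piece n t e.degree k) :
    (aeval f a * monomial e (1 : ℂ)).IsHomogeneous k := by
  unfold piece at ha
  split_ifs at ha with h
  · have h1 : (aeval f a).IsHomogeneous (t * ((k - e.degree) / t)) :=
      IsHomogeneous.aeval ((mem_homogeneousSubmodule _ _).mp ha) f hf
    have h2 := h1.mul (isHomogeneous_monomial (R := ℂ) 1 (rfl : e.degree = _))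
    rwa [Nat.mul_div_cancel' h.2, Nat.sub_add_cancel h.1] at h2
  · rw [(Submodule.mem_bot ℂ).mp ha, map_zero, zero_mul]
    exact isHomogeneous_zero _ _ _

section Pullback

variable {n t : ℕ} {f : Fin (n + 1) → S n} {κ : Type} [Fintype κ] {e : κ → Fin (n + 1) →₀ ℕ}

lemma exists_coeffs (ht : 1 ≤ t) (hf : ∀ i, (f i).IsHomogeneous t)
    (hspan : ∀ h : S n, ∃ c : κ → ℂ,
      h - ∑ α, c α • monomial (e α) 1 ∈ Ideal.span (Set.range f)) (h : S n) :
    ∃ a : κ → S n, ∑ α, aeval f (a α) * monomial (e α) (1 : ℂ) = h := by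
  choose a _ has using fun k => exists_graded_coeffs ht hf e hspan k (homogeneousComponent k h)
    (homogeneousComponent_isHomogeneous k h)
  refine ⟨fun α => ∑ k ∈ Finset.range (h.totalDegree + 1), a k α, ?_⟩
  simp only [map_sum, Finset.sum_mul]
  rw [Finset.sum_comm]
  simp only [has]
  exact sum_homogeneousComponent h

/-- An element of the pulled back ideal has coefficients in the original ideal. -/
lemma exists_coeffs_mem (ht : 1 ≤ t) (hf : ∀ i, (f i).IsHomogeneous t)
    (hspan : ∀ h : S n, ∃ c : κ → ℂ,
      h - ∑ α, c α • monomial (e α) 1 ∈ Ideal.span (Set.range f)) (I : Ideal (S n)) {h : S n}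
    (hh : h ∈ I.map (aeval f : S n →ₐ[ℂ] S n).toRingHom) :
    ∃ a : κ → S n, (∀ α, a α ∈ I) ∧ ∑ α, aeval f (a α) * monomial (e α) (1 : ℂ) = h := by
  have key : ∀ x ∈ I, ∀ r : S n, ∃ a : κ → S n, (∀ α, a α ∈ I) ∧
      ∑ α, aeval f (a α) * monomial (e α) (1 : ℂ) = r * aeval f x := by
    intro x hx r
    obtain ⟨c, rfl⟩ := exists_coeffs ht hf hspan r
    refine ⟨fun α => c α * x, fun α => I.mul_mem_left _ hx, ?_⟩
    rw [Finset.sum_mul]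
    refine Finset.sum_congr rfl fun α _ => ?_
    rw [map_mul]; ring
  induction hh using Submodule.span_induction with
  | mem y hy =>
    obtain ⟨x, hx, rfl⟩ := hy
    obtain ⟨a, ha, hax⟩ := key x hx 1
    exact ⟨a, ha, by rw [hax, one_mul]; rfl⟩
  | zero => exact ⟨0, fun _ => I.zero_mem, by simp⟩
  | add y z _ _ hy hz =>
    obtain ⟨a, ha, rfl⟩ := hy
    obtain ⟨b, hb, rfl⟩ := hz
    exact ⟨a + b, fun α => I.add_mem (ha α) (hb α), by
      simp [add_mul, Finset.sum_add_distrib]⟩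
  | smul r y _ hy =>
    obtain ⟨a, ha, rfl⟩ := hy
    choose b hb hbs using fun α => key (a α) (ha α) (r * monomial (e α) 1)
    refine ⟨fun β => ∑ α, b α β, fun β => I.sum_mem fun α _ => hb α β, ?_⟩
    simp only [map_sum, Finset.sum_mul]
    rw [Finset.sum_comm]
    simp only [hbs]
    rw [smul_eq_mul, Finset.mul_sum]
    exact Finset.sum_congr rfl fun α _ => by ring

/-- Freeness of `S` over `ℂ[f]`, on the level of dimensions: the pulled back ideal is a direct sum
of copies of `I`, one for each basis monomial, with degrees multiplied by `t` and shifted. -/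
lemma finrank_idealPiece_map (ht : 1 ≤ t) (hf : ∀ i, (f i).IsHomogeneous t)
    (hbpf : ∀ x : Fin (n + 1) → ℂ, (∀ i, eval x (f i) = 0) → x = 0)
    (hind : ∀ c : κ → ℂ,
      ∑ α, c α • (monomial (e α) 1 : S n) ∈ Ideal.span (Set.range f) → c = 0)
    (hspan : ∀ h : S n, ∃ c : κ → ℂ,
      h - ∑ α, c α • monomial (e α) 1 ∈ Ideal.span (Set.range f)) (I : Ideal (S n)) (k : ℕ) :
    finrank ℂ (idealPiece (I.map (aeval f : S n →ₐ[ℂ] S n).toRingHom) k) =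
      ∑ α, if (e α).degree ≤ k ∧ t ∣ k - (e α).degree then
        finrank ℂ (idealPiece I ((k - (e α).degree) / t)) else 0 := by
  have hfin : ∀ α, Module.Finite ℂ
      (I.restrictScalars ℂ ⊓ piece n t (e α).degree k : Submodule ℂ (S n)) := fun α =>
    Submodule.finiteDimensional_of_le (inf_le_right.trans (piece_le n t _ k))
  obtain ⟨Θ, hΘ⟩ : ∃ Θ : ((α : κ) →
      (I.restrictScalars ℂ ⊓ piece n t (e α).degree k : Submodule ℂ (S n))) →ₗ[ℂ] S n,
      ∀ a, Θ a = ∑ α, aeval f (a α : S n) * monomial (e α) (1 : ℂ) :=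
    ⟨∑ α, LinearMap.mulRight ℂ (monomial (e α) (1 : ℂ)) ∘ₗ (aeval f).toLinearMap ∘ₗ
      Submodule.subtype _ ∘ₗ LinearMap.proj α, fun a => by simp⟩
  have hinj : Function.Injective Θ := by
    rw [injective_iff_map_eq_zero]
    intro a ha
    have h0 := coeffs_eq_zero_of_aeval ht hf hbpf (fun α => monomial (e α) (1 : ℂ)) hind
      (fun α => (a α : S n)) (by rw [← hΘ]; exact ha)
    funext α
    exact Subtype.ext (congrFun h0 α)
  have hrange : LinearMap.range Θ =
      idealPiece (I.map (aeval f : S n →ₐ[ℂ] S n).toRingHom) k := by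
    apply le_antisymm
    · rintro _ ⟨a, rfl⟩
      rw [hΘ]
      refine Submodule.sum_mem _ fun α _ => ⟨?_, ?_⟩
      · exact Ideal.mul_mem_right _ _ (Ideal.mem_map_of_mem
          (aeval f : S n →ₐ[ℂ] S n).toRingHom (a α).2.1)
      · exact isHomogeneous_aeval_mul hf (e α) (a α).2.2
    · rintro h ⟨h1, h2⟩
      obtain ⟨a, ha, hah⟩ := exists_graded_coeffs ht hf e hspan k h h2
      obtain ⟨b, hb, hbh⟩ := exists_coeffs_mem ht hf hspan I h1
      have hab : (fun α => a α - b α) = 0 :=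
        coeffs_eq_zero_of_aeval ht hf hbpf (fun α => monomial (e α) (1 : ℂ)) hind _ (by
          simp only [map_sub, sub_mul, Finset.sum_sub_distrib, hah, hbh, sub_self])
      refine ⟨fun α => ⟨a α, ?_, ha α⟩, by rw [hΘ]; exact hah⟩
      rw [sub_eq_zero.mp (congrFun hab α)]
      exact hb α
  rw [← hrange, LinearMap.finrank_range_of_inj hinj, Module.finrank_pi_fintype]
  exact Finset.sum_congr rfl fun α _ => finrank_inf_piece t _ k I

end Pullback

/-! ### Hilbert series and alternating Betti sums -/

lemma finrank_freePiece (n : ℕ) (β : ℕ → ℕ → ℕ) (i k : ℕ) :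
    finrank ℂ (freePiece n β i k) =
      ∑ j ∈ range (k + 1), β i j * finrank ℂ (homogeneousSubmodule (Fin (n + 1)) ℂ (k - j)) := by
  rw [Module.finrank_directSum, Finset.sum_range]
  refine Finset.sum_congr rfl fun j _ => ?_
  rw [Module.finrank_pi_fintype, Finset.sum_const, Finset.card_univ, Fintype.card_fin, smul_eq_mul]

/-- The Euler characteristic of the degree-`k` part of a resolution. -/
lemma hilb_eq_sum_finrank {n s : ℕ} {β : ℕ → ℕ → ℕ} {I : Ideal (S n)}
    (hres : IsDegreewiseFreeResolution n s β I) (k : ℕ) :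
    (hilb I k : ℤ) = ∑ i ∈ range (s + 1), (-1 : ℤ) ^ i * finrank ℂ (freePiece n β i k) := by
  obtain ⟨hβ, hex⟩ := hres
  obtain ⟨d, ε, hε, h0, hd⟩ := hex k
  have e0 : finrank ℂ (freePiece n β 0 k) = hilb I k + finrank ℂ (LinearMap.range (d 0)) := by
    have hrn := LinearMap.finrank_range_add_finrank_ker (V := freePiece n β 0 k)
      (V₂ := quotPiece I k) ε
    rw [← hrn, LinearMap.range_eq_top.mpr hε, finrank_top,
      h0.linearMap_ker_eq]
    rfl
  have e1 : ∀ i, finrank ℂ (freePiece n β (i + 1) k) =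
      finrank ℂ (LinearMap.range (d i)) + finrank ℂ (LinearMap.range (d (i + 1))) := by
    intro i
    have hrn := LinearMap.finrank_range_add_finrank_ker (V := freePiece n β (i + 1) k)
      (V₂ := freePiece n β i k) (d i)
    rw [← hrn, (hd i).linearMap_ker_eq]
  have tele : ∀ m, ∑ i ∈ range (m + 1), (-1 : ℤ) ^ i * finrank ℂ (freePiece n β i k) =
      hilb I k + (-1 : ℤ) ^ m * finrank ℂ (LinearMap.range (d m)) := by
    intro m
    induction m with
    | zero =>
      rw [Finset.sum_range_succ, Finset.sum_range_zero, e0]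
      simp
    | succ m ih =>
      rw [Finset.sum_range_succ, ih, e1, pow_succ]
      push_cast
      ring
  have hlast : finrank ℂ (LinearMap.range (d s)) = 0 := by
    have h1 := LinearMap.finrank_range_le (d s)
    rw [finrank_freePiece, Finset.sum_eq_zero fun j _ => by
      rw [hβ _ _ (Nat.lt_succ_self s), zero_mul]] at h1
    omega
  rw [tele, hlast]
  simp

/-- The Hilbert series of `S` itself. -/
noncomputable def hilbS (n : ℕ) : PowerSeries ℤ :=
  PowerSeries.mk fun k => (finrank ℂ (homogeneousSubmodule (Fin (n + 1)) ℂ k) : ℤ)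

/-- The Hilbert series of an ideal. -/
noncomputable def hilbIdeal {n : ℕ} (I : Ideal (S n)) : PowerSeries ℤ :=
  PowerSeries.mk fun k => (finrank ℂ (idealPiece I k) : ℤ)

lemma hilbIdeal_top (n : ℕ) : hilbIdeal (⊤ : Ideal (S n)) = hilbS n := by
  ext k
  rw [hilbIdeal, hilbS, PowerSeries.coeff_mk, PowerSeries.coeff_mk, idealPiece,
    Submodule.restrictScalars_top, top_inf_eq]

lemma hilbS_ne_zero (n : ℕ) : hilbS n ≠ 0 := by
  intro h
  have h0 := congrArg (PowerSeries.coeff 0) h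
  rw [hilbS, PowerSeries.coeff_mk, map_zero, Nat.cast_eq_zero, Submodule.finrank_eq_zero] at h0
  have h1 : (1 : S n) ∈ homogeneousSubmodule (Fin (n + 1)) ℂ 0 := isHomogeneous_one _ _
  rw [h0, Submodule.mem_bot] at h1
  exact one_ne_zero h1

/-- The Hilbert series of `S/I` is the Hilbert series of `S` times the `K`-polynomial, whose
coefficients are the alternating Betti sums. -/
lemma hilbS_sub_hilbIdeal {n s : ℕ} {β : ℕ → ℕ → ℕ} {I : Ideal (S n)}
    (hres : IsDegreewiseFreeResolution n s β I) {B : ℕ → ℤ}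
    (hB : ∀ j, B j = ∑ i ∈ range (s + 1), (-1 : ℤ) ^ i * β i j) :
    hilbS n - hilbIdeal I = PowerSeries.mk B * hilbS n := by
  ext k
  have h1 := hilb_add_finrank_idealPiece I k
  have h2 := hilb_eq_sum_finrank hres k
  have h3 : PowerSeries.coeff k (hilbS n - hilbIdeal I) = hilb I k := by
    rw [map_sub, hilbS, hilbIdeal, PowerSeries.coeff_mk, PowerSeries.coeff_mk, ← h1]
    push_cast
    ring
  rw [h3, h2, PowerSeries.coeff_mul, Finset.Nat.sum_antidiagonal_eq_sum_range_succ_mk]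
  simp only [finrank_freePiece, hilbS, PowerSeries.coeff_mk, hB, Finset.sum_mul, Nat.cast_sum,
    Nat.cast_mul, Finset.mul_sum]
  rw [Finset.sum_comm]
  simp only [mul_assoc]

/-- The Hilbert series of a pulled back ideal `I_t`: substitute `X ^ t` in the Hilbert series of
`I` and multiply by the Hilbert series `∑ X ^ d α` of the fibre `S/(f)`. -/
lemma hilbIdeal_map {n t : ℕ} (ht : 1 ≤ t) {κ : Type} [Fintype κ] (d : κ → ℕ)
    {I J : Ideal (S n)}
    (h : ∀ k, finrank ℂ (idealPiece J k) = ∑ α, if d α ≤ k ∧ t ∣ k - d α then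
        finrank ℂ (idealPiece I ((k - d α) / t)) else 0) :
    hilbIdeal J = (∑ α, PowerSeries.X ^ d α) *
      PowerSeries.expand t (Nat.one_le_iff_ne_zero.mp ht) (hilbIdeal I) := by
  ext k
  rw [hilbIdeal, PowerSeries.coeff_mk, h, Finset.sum_mul, map_sum, Nat.cast_sum]
  refine Finset.sum_congr rfl fun α _ => ?_
  rw [PowerSeries.coeff_X_pow_mul', PowerSeries.coeff_expand]
  by_cases h1 : d α ≤ k
  · by_cases h2 : t ∣ k - d α
    · simp [h1, h2, hilbIdeal]
    · simp [h1, h2]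
  · simp [h1]

/-- Let `φ : ℙⁿ → ℙⁿ` be given by `n+1` forms `f_0, …, f_n` of degree `t`
without a common zero, and let `I_t` be the ideal obtained from `I` by substituting
`f_i` for `x_i`.  Since the pullback of a graded free resolution of `S/I` is a graded
free resolution of `S/I_t`, the alternating Betti sums satisfy `B_j(I_t) = 0` if
`t ∤ j`, and `B_{tj}(I_t) = B_j(I)`.  (By their independence of the resolution, the
conclusion holds for the sums computed from any resolutions `β` of `S/I` and `β'` of
`S/I_t`.) -/
theorem betti_numbers_of_pullback
    (n t : ℕ) (ht : 1 ≤ t) (I : Ideal (S n)) (hI : IsHomogeneousIdeal I)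
    (f : Fin (n + 1) → S n) (hf : ∀ i, (f i).IsHomogeneous t)
    (hbpf : ∀ x : Fin (n + 1) → ℂ, (∀ i, eval x (f i) = 0) → x = 0)
    (It : Ideal (S n)) (hIt : It = I.map (aeval f : S n →ₐ[ℂ] S n).toRingHom)
    (s s' : ℕ) (β β' : ℕ → ℕ → ℕ)
    (hres : IsDegreewiseFreeResolution n s β I)
    (hres' : IsDegreewiseFreeResolution n s' β' It)
    (B B' : ℕ → ℤ)
    (hB : ∀ j, B j = ∑ i ∈ range (s + 1), (-1 : ℤ) ^ i * β i j)
    (hB' : ∀ j, B' j = ∑ i ∈ range (s' + 1), (-1 : ℤ) ^ i * β' i j) :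
    ∀ j : ℕ, (¬ t ∣ j → B' j = 0) ∧ B' (t * j) = B j := by
  subst hIt
  obtain ⟨κ, _, e, hind, hspan⟩ := exists_monomial_basis hbpf
  have hmap : ∀ J : Ideal (S n), hilbIdeal (J.map (aeval f : S n →ₐ[ℂ] S n).toRingHom) = _ :=
    fun J => hilbIdeal_map ht (fun α => (e α).degree)
      (finrank_idealPiece_map ht hf hbpf hind hspan J)
  have hT := hmap ⊤
  rw [Ideal.map_top, hilbIdeal_top] at hT
  have h1 := hilbS_sub_hilbIdeal hres hB
  have h2 := hilbS_sub_hilbIdeal hres' hB'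
  have hexp : PowerSeries.mk B' =
      PowerSeries.expand t (Nat.one_le_iff_ne_zero.mp ht) (PowerSeries.mk B) := by
    apply mul_right_cancel₀ (hilbS_ne_zero n)
    rw [← h2, hmap I]
    conv_rhs => rw [hT, mul_left_comm, ← map_mul, ← h1, map_sub, mul_sub, ← hT]
  intro j
  constructor
  · intro hj
    have h3 := congrArg (PowerSeries.coeff j) hexp
    rwa [PowerSeries.coeff_mk, PowerSeries.coeff_expand_of_not_dvd _ _ _ hj] at h3
  · have h3 := congrArg (PowerSeries.coeff (t * j)) hexp
    rwa [PowerSeries.coeff_mk, PowerSeries.coeff_expand_mul, PowerSeries.coeff_mk] at h3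
end

section
/- (Consequence of Macaulay–Gotzmann) Let I ⊆ S = C[x_0,...,x_n] be a homogeneous ideal and k a positive integer. If h_I(k) ≤ k then h_I(k+1) ≤ h_I(k). If moreover the linear system I_{k+1} is base point free, then h_I(k+1) < h_I(k) or h_I(k) = 0. -/
/-!
Put `k = j + 1`, and let `V_a` be the degree `a` piece of `S / I`. Since `S_a = S_1 ^ a`, one has
`V_a = L ^ a` for `L = V_1`, as submodules of the algebra `S / I`; homogeneity of `I` plays no role.

*The inequality.* `exists_span_mul_pow_eq` provides a linear form `l` with `l V_j = V_k`. Then also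
`l V_k = l L V_j = L V_k = V_{k+1}`, so `dim V_{k+1} ≤ dim V_k`. To find `l`, let it maximize the
rank of `l : V_j → V_k`, and suppose `l V_j ≠ V_k`. As `V_k` is spanned by `k`-th powers
(`pow_le_of_forall_pow_mem`), some `m ^ k` lies outside `l V_j`. By semicontinuity of the rank
(`finite_not_linearIndependent`) and maximality, `m ^ k ∉ (l + t m) V_j` for all but finitely many
`t`. Choose `k + 1` such values `t_0, …, t_k`. The `k + 1` products `∏_{i' ≠ i} (l + t_{i'} m)` are
linearly independent in `V_k`: modulo `(l + t_i m) V_j` all of them vanish except the `i`-th, which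
is a nonzero multiple of `m ^ k`. This contradicts `dim V_k ≤ k`.

*The base point.* If `dim V_{k+1} = dim V_k > 0`, multiplication by `l` is an isomorphism
`V_k → V_{k+1}`, and the operators `T_i = l⁻¹ x_i` on `V_k = l V_j` commute, because
`T_i T_{i'} (l q) = l⁻¹ (x_i x_{i'} q)`. A common eigenvector `φ` of their transposes, with
eigenvalues `x = (x_i)`, satisfies `φ(f) = f(x) φ(l ^ k)` on forms of degree `k`, and the functional
`φ ∘ l⁻¹` on `V_{k+1}` sends a form `f` of degree `k + 1` to `f(x) φ(l ^ k)`. Here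
`φ(l ^ k) ≠ 0` and `x ≠ 0` since `φ ≠ 0`, so `x` is a base point of `I_{k+1}`
(`exists_base_point`).
-/

open MvPolynomial Module Finset

/-! ### Spanning by powers and semicontinuity of rank -/

/-- The powers of the elements of `L` span `L ^ k`: polarization, one factor at a time. -/
theorem pow_le_of_forall_pow_mem {A : Type*} [CommRing A] [Algebra ℂ A]
    (L N : Submodule ℂ A) (k : ℕ) (hN : ∀ m ∈ L, m ^ k ∈ N) : L ^ k ≤ N := by
  have key : ∀ a b : ℕ, a + b = k → ∀ q ∈ L ^ a, ∀ u ∈ L, q * u ^ b ∈ N := by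
    intro a
    induction a with
    | zero =>
      intro b hb q hq u hu
      obtain ⟨c, rfl⟩ := Submodule.mem_one.1 (by simpa using hq)
      rw [← Algebra.smul_def]
      obtain rfl : b = k := by omega
      exact N.smul_mem c (hN u hu)
    | succ a ih =>
      intro b hb q hq u hu
      rw [pow_succ] at hq
      induction hq using Submodule.mul_induction_on' with
      | add x hx y hy h1 h2 => rw [add_mul]; exact N.add_mem h1 h2
      | mem_mul_mem q hq m hm =>
        by_contra hcon
        obtain ⟨f, hf, hfN⟩ := Submodule.exists_le_ker_of_notMem hcon
        -- `P(s) = f (q * (u + s m) ^ (b + 1))` vanishes identically; read off its linear coefficient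
        let P : Polynomial ℂ := ∑ i ∈ range (b + 2),
          Polynomial.C (f (q * (u ^ (b + 1 - i) * m ^ i)) * ((b + 1).choose i : ℂ)) *
            Polynomial.X ^ i
        have hP : P = 0 := by
          apply Polynomial.funext
          intro s
          have h1 : q * (s • m + u) ^ (b + 1) ∈ N :=
            ih (b + 1) (by omega) q hq _ (L.add_mem (L.smul_mem s hm) hu)
          have h2 : f (q * (s • m + u) ^ (b + 1)) = 0 := hfN h1
          rw [add_pow, Finset.mul_sum, map_sum] at h2
          rw [Polynomial.eval_finsetSum, Polynomial.eval_zero, ← h2]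
          refine Finset.sum_congr rfl fun i _ => ?_
          have : q * ((s • m) ^ i * u ^ (b + 1 - i) * ((b + 1).choose i : A)) =
              (s ^ i * ((b + 1).choose i : ℂ)) • (q * (u ^ (b + 1 - i) * m ^ i)) := by
            simp only [Algebra.smul_def, map_mul, map_pow, map_natCast, mul_pow]
            ring
          rw [this, map_smul]
          simp
          ring
        have h3 : P.coeff 1 = f (q * (u ^ b * m)) * ((b + 1 : ℕ) : ℂ) := by
          simp only [P, Polynomial.finsetSum_coeff, Polynomial.coeff_C_mul_X_pow]
          rw [Finset.sum_ite_eq, if_pos (by simp)]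
          simp
        rw [hP, Polynomial.coeff_zero] at h3
        have h4 : ((b + 1 : ℕ) : ℂ) ≠ 0 := by exact_mod_cast Nat.succ_ne_zero b
        apply hf
        have h5 : f (q * (u ^ b * m)) = 0 := by
          rcases mul_eq_zero.1 h3.symm with h | h
          · exact h
          · exact absurd h h4
        rw [← h5]
        congr 1
        ring
  intro q hq
  simpa using key k 0 rfl q hq 0 L.zero_mem

/-- Linear independence is an open condition along a line `t ↦ e + t f`: a suitable minor is a
polynomial in `t` that equals `1` at `t = 0`. -/
theorem finite_not_linearIndependent {W : Type*} [AddCommGroup W] [Module ℂ W] {N : ℕ}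
    (e f : Fin N → W) (he : LinearIndependent ℂ e) :
    {t : ℂ | ¬ LinearIndependent ℂ (fun i => e i + t • f i)}.Finite := by
  classical
  obtain ⟨g, hg⟩ := LinearMap.exists_leftInverse_of_injective (Fintype.linearCombination ℂ e)
    (LinearMap.ker_eq_bot.2 (he.fintypeLinearCombination_injective))
  have hge : ∀ i, g (e i) = Pi.single i 1 := by
    intro i
    have := LinearMap.congr_fun hg (Pi.single i 1)
    simpa [Fintype.linearCombination_apply_single] using this
  let M : Matrix (Fin N) (Fin N) (Polynomial ℂ) := Matrix.of fun i j =>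
    Polynomial.C (g (e i) j) + Polynomial.X * Polynomial.C (g (f i) j)
  have hM : ∀ t : ℂ, M.det.eval t = Matrix.det (fun i j => g (e i + t • f i) j) := by
    intro t
    rw [← Polynomial.coe_evalRingHom, RingHom.map_det]
    congr 1
    ext i j
    simp [M]
    ring
  have hM0 : M.det ≠ 0 := by
    intro h0
    have h1 := hM 0
    have h2 : (fun i j => g (e i + (0 : ℂ) • f i) j) = (1 : Matrix (Fin N) (Fin N) ℂ) := by
      ext i j
      simp [hge, Matrix.one_apply, Pi.single_apply, eq_comm]
    rw [h2, h0] at h1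
    simp at h1
  refine (M.det.roots.toFinset.finite_toSet).subset ?_
  intro t ht
  simp only [Finset.mem_coe, Multiset.mem_toFinset, Polynomial.mem_roots hM0, Polynomial.IsRoot.def]
  by_contra hne
  apply ht
  rw [hM] at hne
  have := Matrix.linearIndependent_rows_of_det_ne_zero hne
  exact LinearIndependent.of_comp g this

/-! ### Restriction to a general hyperplane -/

theorem prod_mem_pow_card {A : Type*} [CommRing A] [Algebra ℂ A] (L : Submodule ℂ A)
    {ι : Type*} (s : Finset ι) (f : ι → A) (hf : ∀ i, f i ∈ L) :
    ∏ i ∈ s, f i ∈ L ^ s.card := by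
  classical
  induction s using Finset.induction_on with
  | empty => exact (Submodule.mem_one).2 ⟨1, by simp⟩
  | insert a s ha ih =>
    rw [prod_insert ha, card_insert_of_notMem ha, pow_succ']
    exact Submodule.mul_mem_mul (hf a) ih

/-- Modulo `u L ^ (#s - 1)`, the product of the `u + c i • m` over `s` is `(∏ c i) • m ^ #s`.
The cofactor `q` vanishes for empty `s`, which stands in for `L ^ (-1) = 0`. -/
theorem exists_prod_eq {A : Type*} [CommRing A] [Algebra ℂ A] (L : Submodule ℂ A)
    {u m : A} (hu : u ∈ L) (hm : m ∈ L) {ι : Type*} [DecidableEq ι] (s : Finset ι) (c : ι → ℂ) :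
    ∃ q : A, (∀ r, s.card = r + 1 → q ∈ L ^ r) ∧ (s.card = 0 → q = 0) ∧
      ∏ i ∈ s, (u + c i • m) = (∏ i ∈ s, c i) • m ^ s.card + u * q := by
  induction s using Finset.induction_on with
  | empty => exact ⟨0, by simp, by simp, by simp⟩
  | insert a s ha ih =>
    obtain ⟨q, hq, hq0, h⟩ := ih
    refine ⟨(∏ i ∈ s, c i) • m ^ s.card + (u + c a • m) * q, ?_, ?_, ?_⟩
    · intro r hr
      rw [card_insert_of_notMem ha] at hr
      obtain rfl : s.card = r := by omega
      refine Submodule.add_mem _ (Submodule.smul_mem _ _ (Submodule.pow_mem_pow _ hm _)) ?_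
      rcases Nat.eq_zero_or_pos s.card with h0 | h0
      · rw [hq0 h0, mul_zero]; exact Submodule.zero_mem _
      · obtain ⟨r, hr⟩ : ∃ r, s.card = r + 1 := ⟨s.card - 1, by omega⟩
        rw [hr, pow_succ']
        exact Submodule.mul_mem_mul (L.add_mem hu (L.smul_mem _ hm)) (hq r hr)
    · intro h0; rw [card_insert_of_notMem ha] at h0; omega
    · rw [prod_insert ha, prod_insert ha, card_insert_of_notMem ha, h]
      simp only [Algebra.smul_def, map_mul]
      ring

/-- The instance of Green's hyperplane restriction theorem that is needed: if
`dim L ^ k ≤ k`, then some `ℓ ∈ L` satisfies `ℓ L ^ (k - 1) = L ^ k` (here `k = j + 1`). -/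
theorem exists_span_mul_pow_eq {A : Type*} [CommRing A] [Algebra ℂ A] (L : Submodule ℂ A)
    [hfin : ∀ j : ℕ, FiniteDimensional ℂ ↥(L ^ j)] (j : ℕ)
    (h : finrank ℂ ↥(L ^ (j + 1)) ≤ j + 1) :
    ∃ l ∈ L, Submodule.span ℂ {l} * L ^ j = L ^ (j + 1) := by
  classical
  have hle : ∀ l ∈ L, Submodule.span ℂ {l} * L ^ j ≤ L ^ (j + 1) := by
    intro l hl
    rw [pow_succ']
    exact mul_le_mul_left (by simpa using hl) _
  have hfd : ∀ l ∈ L, FiniteDimensional ℂ ↥(Submodule.span ℂ {l} * L ^ j) := fun l hl =>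
    Submodule.finiteDimensional_of_le (hle l hl)
  -- a linear form `l` for which multiplication has maximal rank
  obtain ⟨l, hl, hmax⟩ : ∃ l ∈ L, ∀ l' ∈ L,
      finrank ℂ ↥(Submodule.span ℂ {l'} * L ^ j) ≤ finrank ℂ ↥(Submodule.span ℂ {l} * L ^ j) := by
    obtain ⟨⟨l, hl⟩, h⟩ : ∃ l : L, ∀ l' : L,
      finrank ℂ ↥(L ^ (j + 1)) - finrank ℂ ↥(Submodule.span ℂ {l.1} * L ^ j) ≤
      finrank ℂ ↥(L ^ (j + 1)) - finrank ℂ ↥(Submodule.span ℂ {l'.1} * L ^ j) :=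
      ⟨Function.argmin _, fun l' => Function.argmin_le
        (fun l : L => finrank ℂ ↥(L ^ (j + 1)) - finrank ℂ ↥(Submodule.span ℂ {l.1} * L ^ j)) l'⟩
    refine ⟨l, hl, fun l' hl' => ?_⟩
    have h1 := h ⟨l', hl'⟩
    have h2 := Submodule.finrank_mono (hle l hl)
    have h3 := Submodule.finrank_mono (hle l' hl')
    simp only at h1
    omega
  refine ⟨l, hl, ?_⟩
  by_contra hne
  obtain ⟨m, hm, hmN⟩ : ∃ m ∈ L, m ^ (j + 1) ∉ Submodule.span ℂ {l} * L ^ j := by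
    by_contra! hcon
    exact hne (le_antisymm (hle l hl) (pow_le_of_forall_pow_mem L _ _ hcon))
  have := hfd l hl
  set ρ := finrank ℂ ↥(Submodule.span ℂ {l} * L ^ j) with hρ
  let b := finBasis ℂ ↥(Submodule.span ℂ {l} * L ^ j)
  have hb : ∀ i, ∃ a ∈ L ^ j, l * a = (b i : A) := fun i =>
    Submodule.mem_span_singleton_mul.1 (b i).2
  choose a ha hab using hb
  have hLI : LinearIndependent ℂ (Fin.cons (m ^ (j + 1)) (fun i => (b i : A)) :
      Fin (ρ + 1) → A) := by
    rw [linearIndependent_finCons]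
    refine ⟨b.linearIndependent.map' _ (Submodule.ker_subtype _), fun hmem => hmN ?_⟩
    refine Submodule.span_le.2 ?_ hmem
    rintro _ ⟨i, rfl⟩
    exact (b i).2
  have hbad := finite_not_linearIndependent _
    (Fin.cons 0 (fun i => m * a i) : Fin (ρ + 1) → A) hLI
  have hgood : ∀ t : ℂ, LinearIndependent ℂ (fun i =>
      (Fin.cons (m ^ (j + 1)) (fun i => (b i : A)) : Fin (ρ + 1) → A) i +
      t • (Fin.cons 0 (fun i => m * a i) : Fin (ρ + 1) → A) i) →
      m ^ (j + 1) ∉ Submodule.span ℂ {l + t • m} * L ^ j := by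
    intro t ht hmem
    have hlt : l + t • m ∈ L := L.add_mem hl (L.smul_mem t hm)
    have := hfd _ hlt
    have hin : ∀ i, (Fin.cons (m ^ (j + 1)) (fun i => (b i : A)) : Fin (ρ + 1) → A) i +
      t • (Fin.cons 0 (fun i => m * a i) : Fin (ρ + 1) → A) i ∈
        Submodule.span ℂ {l + t • m} * L ^ j := by
      intro i
      refine Fin.cases ?_ (fun i => ?_) i
      · simpa using hmem
      · refine Submodule.mem_span_singleton_mul.2 ⟨a i, ha i, ?_⟩
        simp [← hab, add_mul]
    have hLI' : LinearIndependent ℂ (fun i => (⟨_, hin i⟩ :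
        ↥(Submodule.span ℂ {l + t • m} * L ^ j))) :=
      LinearIndependent.of_comp (Submodule.subtype _) ht
    have h1 := hLI'.fintype_card_le_finrank
    have h2 := hmax _ hlt
    simp at h1
    omega
  have hinf := hbad.infinite_compl
  let t : ℕ → ℂ := fun i => (hinf.natEmbedding _ i : ℂ)
  have ht_inj : Function.Injective t := fun x y hxy =>
    (hinf.natEmbedding _).injective (Subtype.ext hxy)
  have ht : ∀ i, m ^ (j + 1) ∉ Submodule.span ℂ {l + t i • m} * L ^ j := fun i =>
    hgood _ (not_not.1 (hinf.natEmbedding _ i).2)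
  -- `j + 2` products of `j + 1` linear forms, which cannot be independent
  let p : Fin (j + 2) → A := fun i => ∏ i' ∈ univ.erase i, (l + t i' • m)
  have hcard : ∀ i : Fin (j + 2), (univ.erase i).card = j + 1 := by
    intro i; simp
  have hu : ∀ i, l + t i • m ∈ L := fun i => L.add_mem hl (L.smul_mem _ hm)
  have hp : ∀ i, p i ∈ L ^ (j + 1) := by
    intro i
    have h := prod_mem_pow_card L (univ.erase i)
      (fun x : Fin (j + 2) => l + t x • m) fun x => hu x
    rwa [hcard] at h
  have hpLI : LinearIndependent ℂ p := by
    rw [Fintype.linearIndependent_iff]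
    intro c hc i
    -- reduce the relation modulo `(l + t i • m) L ^ j`: only the `i`-th term survives
    have h1 : ∀ i' ≠ i, p i' ∈ Submodule.span ℂ {l + t i • m} * L ^ j := by
      intro i' hi'
      have hmem : i ∈ univ.erase i' := by simp [hi'.symm]
      have hc' : ((univ.erase i').erase i).card = j := by
        rw [card_erase_of_mem hmem, hcard]; rfl
      refine Submodule.mem_span_singleton_mul.2
        ⟨∏ x ∈ (univ.erase i').erase i, (l + t x • m), ?_,
          mul_prod_erase _ (fun x : Fin (j + 2) => l + t x • m) hmem⟩
      have h := prod_mem_pow_card L ((univ.erase i').erase i)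
        (fun x : Fin (j + 2) => l + t x • m) fun x => hu x
      rwa [hc'] at h
    obtain ⟨q, hq, -, h2⟩ := exists_prod_eq L (hu i) hm (univ.erase i)
      (fun i' : Fin (j + 2) => t i' - t i)
    rw [hcard] at hq h2
    have h3 : p i = (∏ i' ∈ univ.erase i, (t i' - t i)) • m ^ (j + 1) + (l + t i • m) * q := by
      rw [← h2]
      refine prod_congr rfl fun i' _ => ?_
      rw [sub_smul]; abel
    by_contra hci
    apply ht i
    have h4 : c i • p i ∈ Submodule.span ℂ {l + t i • m} * L ^ j := by
      rw [← add_sum_erase _ _ (mem_univ i)] at hc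
      rw [eq_neg_of_add_eq_zero_left hc]
      refine Submodule.neg_mem _ (Submodule.sum_mem _ fun i' hi' => Submodule.smul_mem _ _ ?_)
      exact h1 i' (ne_of_mem_erase hi')
    have h5 : p i ∈ Submodule.span ℂ {l + t i • m} * L ^ j :=
      (Submodule.smul_mem_iff _ hci).1 h4
    rw [h3] at h5
    have h6 := (Submodule.add_mem_iff_left _
      (Submodule.mem_span_singleton_mul.2 ⟨q, hq j rfl, rfl⟩)).1 h5
    refine (Submodule.smul_mem_iff _ ?_).1 h6
    refine prod_ne_zero_iff.2 fun i' hi' => sub_ne_zero.2 fun h => ne_of_mem_erase hi' ?_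
    exact Fin.ext (ht_inj h)
  have hLI' : LinearIndependent ℂ (fun i => (⟨_, hp i⟩ : ↥(L ^ (j + 1)))) :=
    LinearIndependent.of_comp (Submodule.subtype _) hpLI
  have h1 := hLI'.fintype_card_le_finrank
  simp at h1
  omega

theorem span_mul_pow_succ {A : Type*} [CommRing A] [Algebra ℂ A] (L : Submodule ℂ A) {l : A}
    {j : ℕ} (hlj : Submodule.span ℂ {l} * L ^ j = L ^ (j + 1)) :
    Submodule.span ℂ {l} * L ^ (j + 1) = L ^ (j + 2) := by
  rw [pow_succ' L j, mul_left_comm, hlj, ← pow_succ']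

/-! ### Common eigenvectors and base points -/

/-- Commuting endomorphisms of a nonzero finite-dimensional complex space have a common
eigenvector. -/
theorem exists_common_eigenvector {ι : Type*} (d : ℕ) :
    ∀ (V : Type) [AddCommGroup V] [Module ℂ V] [FiniteDimensional ℂ V] [Nontrivial V]
      (T : ι → V →ₗ[ℂ] V), finrank ℂ V = d → (∀ i j v, T i (T j v) = T j (T i v)) →
      ∃ v : V, v ≠ 0 ∧ ∃ μ : ι → ℂ, ∀ i, T i v = μ i • v := by
  induction d using Nat.strong_induction_on with
  | _ d ih =>
    intro V _ _ _ _ T hd hT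
    by_cases hsc : ∀ i, ∃ c : ℂ, ∀ v, T i v = c • v
    · choose μ hμ using hsc
      obtain ⟨v, hv⟩ := exists_ne (0 : V)
      exact ⟨v, hv, μ, fun i => hμ i v⟩
    · push Not at hsc
      obtain ⟨i, hi⟩ := hsc
      obtain ⟨c, hc⟩ := Module.End.exists_eigenvalue (T i)
      -- the eigenspace of a non-scalar `T i` is proper, nonzero and stable under all `T j`
      let E : Submodule ℂ V := Module.End.eigenspace (T i) c
      have hE : E < ⊤ := by
        refine lt_top_iff_ne_top.2 fun h => ?_
        obtain ⟨v, hv⟩ := hi c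
        exact hv (Module.End.mem_eigenspace_iff.1 (show v ∈ E from h ▸ Submodule.mem_top))
      have hstab : ∀ j, ∀ v ∈ E, T j v ∈ E := by
        intro j v hv
        rw [Module.End.mem_eigenspace_iff] at hv ⊢
        rw [hT, hv, map_smul]
      have : Nontrivial E := Submodule.nontrivial_iff_ne_bot.2 hc
      obtain ⟨v, hv, μ, hμ⟩ := ih (finrank ℂ E) (hd ▸ Submodule.finrank_lt hE.ne) E
        (fun j => (T j).restrict (hstab j)) rfl
        (fun j j' v => Subtype.ext (hT j j' v))
      exact ⟨v, fun h => hv (Subtype.ext h), μ, fun j => congrArg Subtype.val (hμ j)⟩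

/-- Linear maps agree on forms of degree `a + 1` once they agree on the products of a variable and
a form of degree `a`. -/
theorem hom_ext_succ {n a : ℕ} {W : Type*} [AddCommGroup W] [Module ℂ W] (F G : S n →ₗ[ℂ] W)
    (h : ∀ i, ∀ g : S n, g.IsHomogeneous a → F (X i * g) = G (X i * g)) (f : S n)
    (hf : f.IsHomogeneous (a + 1)) : F f = G f := by
  have hle : homogeneousSubmodule (Fin (n + 1)) ℂ (a + 1) ≤ LinearMap.eqLocus F G := by
    rw [← homogeneousSubmodule_one_pow, pow_succ', homogeneousSubmodule_one_pow,
      homogeneousSubmodule_one_eq_span_X, Submodule.mul_le]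
    intro x hx g hg
    induction hx using Submodule.span_induction with
    | mem x hx => obtain ⟨i, rfl⟩ := hx; exact h i g hg
    | zero => rw [zero_mul]; exact Submodule.zero_mem _
    | add x y _ _ hx hy => rw [add_mul]; exact Submodule.add_mem _ hx hy
    | smul c x _ hx => rw [smul_mul_assoc]; exact Submodule.smul_mem _ _ hx
  exact hle hf

/-- If multiplication by `l` maps `V_{k-1}` onto `V_k`, and `dim V_{k+1} = dim V_k > 0`, then the degree `k + 1` forms in the kernel of `π` have a common nontrivial
zero (here `k = j + 1` and `V_a` is the image of the forms of degree `a`). -/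
theorem exists_base_point {n : ℕ} {A : Type} [CommRing A] [Algebra ℂ A] (π : S n →ₐ[ℂ] A)
    (L : Submodule ℂ A) (hL : ∀ a, (homogeneousSubmodule (Fin (n + 1)) ℂ a).map π.toLinearMap = L ^ a)
    [hfin : ∀ a : ℕ, FiniteDimensional ℂ ↥(L ^ a)] (j : ℕ) (l : A) (hl : l ∈ L)
    (hlj : Submodule.span ℂ {l} * L ^ j = L ^ (j + 1))
    (heq : finrank ℂ ↥(L ^ (j + 2)) = finrank ℂ ↥(L ^ (j + 1)))
    (hpos : 0 < finrank ℂ ↥(L ^ (j + 1))) :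
    ∃ x : Fin (n + 1) → ℂ, x ≠ 0 ∧
      ∀ g : S n, g.IsHomogeneous (j + 2) → π g = 0 → eval x g = 0 := by
  have hlj' : Submodule.span ℂ {l} * L ^ (j + 1) = L ^ (j + 2) := span_mul_pow_succ L hlj
  have hX : ∀ i, π (X i) ∈ L := fun i => by
    rw [← pow_one L, ← hL 1]
    exact ⟨X i, isHomogeneous_X _ i, rfl⟩
  have hmem : ∀ a (f : S n), f.IsHomogeneous a → π f ∈ L ^ a := fun a f hf => by
    rw [← hL a]; exact ⟨f, hf, rfl⟩
  -- multiplication by `l` on `V_k`, and a left inverse of it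
  let μl : ↥(L ^ (j + 1)) →ₗ[ℂ] A := (LinearMap.mulLeft ℂ l).domRestrict (L ^ (j + 1))
  have hrange : LinearMap.range μl = L ^ (j + 2) := by
    rw [← hlj']
    ext y
    rw [Submodule.mem_span_singleton_mul]
    simp [μl]
  have hker : LinearMap.ker μl = ⊥ := by
    have h1 := LinearMap.finrank_range_add_finrank_ker μl
    rw [hrange, heq] at h1
    exact Submodule.finrank_eq_zero.1 (by omega)
  obtain ⟨g, hg⟩ := LinearMap.exists_leftInverse_of_injective μl hker
  have hg' : ∀ r (hr : r ∈ L ^ (j + 1)), g (l * r) = ⟨r, hr⟩ := fun r hr =>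
    LinearMap.congr_fun hg ⟨r, hr⟩
  have hxq : ∀ i, ∀ q ∈ L ^ j, π (X i) * q ∈ L ^ (j + 1) := fun i q hq => by
    rw [pow_succ']; exact Submodule.mul_mem_mul (hX i) hq
  have hlq : ∀ q ∈ L ^ j, l * q ∈ L ^ (j + 1) := fun q hq => by
    rw [pow_succ']; exact Submodule.mul_mem_mul hl hq
  let T : Fin (n + 1) → ↥(L ^ (j + 1)) →ₗ[ℂ] ↥(L ^ (j + 1)) := fun i =>
    g ∘ₗ LinearMap.mulLeft ℂ (π (X i)) ∘ₗ (L ^ (j + 1)).subtype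
  have hT : ∀ i q (hq : q ∈ L ^ j), T i ⟨l * q, hlq q hq⟩ = ⟨π (X i) * q, hxq i q hq⟩ := by
    intro i q hq
    rw [← hg' _ (hxq i q hq)]
    simp only [T, LinearMap.comp_apply, LinearMap.mulLeft_apply, Submodule.subtype_apply]
    congr 1
    ring
  have hcomm : ∀ i i' v, T i (T i' v) = T i' (T i v) := by
    rintro i i' ⟨v, hv⟩
    obtain ⟨q, hq, rfl⟩ := Submodule.mem_span_singleton_mul.1 (hlj.symm ▸ hv)
    rw [hT i q hq, hT i' q hq]
    simp only [T, LinearMap.comp_apply, LinearMap.mulLeft_apply, Submodule.subtype_apply]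
    congr 1
    ring
  have : Nontrivial ↥(L ^ (j + 1)) := finrank_pos_iff.1 hpos
  obtain ⟨φ, hφ, x, hx⟩ := exists_common_eigenvector _ (Dual ℂ ↥(L ^ (j + 1)))
    (fun i => (T i).dualMap) rfl (by
      intro i i' φ
      ext v
      simp [hcomm i i' v])
  have hx' : ∀ i v, φ (T i v) = x i * φ v := fun i v => by
    simpa using LinearMap.congr_fun (hx i) v
  obtain ⟨Φ, hΦ⟩ := LinearMap.exists_extend φ
  have hΦ' : ∀ v (hv : v ∈ L ^ (j + 1)), Φ v = φ ⟨v, hv⟩ := fun v hv =>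
    LinearMap.congr_fun hΦ ⟨v, hv⟩
  have hΦx : ∀ i, ∀ q ∈ L ^ j, Φ (π (X i) * q) = x i * Φ (l * q) := fun i q hq => by
    rw [hΦ' _ (hxq i q hq), hΦ' _ (hlq q hq), ← hx', hT i q hq]
  -- `Φ` is evaluation at `x`, up to the scalar `Φ (l ^ (j + 1))`; at most `j + 1` variables are
  -- traded for `l`, one at a time
  have key : ∀ a b, a + b = j + 1 → ∀ f : S n, f.IsHomogeneous a →
      Φ (π f * l ^ b) = eval x f * Φ (l ^ (j + 1)) := by
    intro a
    induction a with
    | zero =>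
      intro b hb f hf
      obtain rfl : b = j + 1 := by omega
      rw [← totalDegree_zero_iff_isHomogeneous, totalDegree_eq_zero_iff_eq_C] at hf
      rw [hf, ← algebraMap_eq, AlgHom.commutes, ← Algebra.smul_def]
      simp
    | succ a ih =>
      intro b hb f hf
      refine hom_ext_succ (Φ ∘ₗ LinearMap.mulRight ℂ (l ^ b) ∘ₗ π.toLinearMap)
        ((LinearMap.mulRight ℂ (Φ (l ^ (j + 1)))) ∘ₗ (aeval x).toLinearMap) ?_ f hf
      intro i g hg
      have h1 : π g * l ^ b ∈ L ^ j := by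
        rw [show j = a + b by omega, pow_add]
        exact Submodule.mul_mem_mul (hmem a g hg) (Submodule.pow_mem_pow _ hl _)
      have h2 := hΦx i _ h1
      have h3 := ih (b + 1) (by omega) g hg
      rw [show l * (π g * l ^ b) = π g * l ^ (b + 1) by ring, h3] at h2
      simp only [LinearMap.comp_apply, LinearMap.mulRight_apply, AlgHom.toLinearMap_apply,
        map_mul, aeval_X, mul_assoc]
      rw [h2]
      simp [aeval_eq_eval]
  have key' : ∀ f : S n, f.IsHomogeneous (j + 1) → Φ (π f) = eval x f * Φ (l ^ (j + 1)) :=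
    fun f hf => by simpa using key (j + 1) 0 rfl f hf
  have hsurj : ∀ v ∈ L ^ (j + 1), ∃ f : S n, f.IsHomogeneous (j + 1) ∧ π f = v := fun v hv => by
    rw [← hL] at hv
    obtain ⟨f, hf, rfl⟩ := hv
    exact ⟨f, hf, rfl⟩
  have hc : Φ (l ^ (j + 1)) ≠ 0 := by
    intro h0
    apply hφ
    ext ⟨v, hv⟩
    obtain ⟨f, hf, rfl⟩ := hsurj v hv
    rw [← hΦ' _ hv, key' f hf, h0]
    simp
  refine ⟨x, ?_, ?_⟩
  · rintro rfl
    obtain ⟨f, hf, hfl⟩ := hsurj _ (Submodule.pow_mem_pow _ hl (j + 1))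
    apply hc
    have h0 := hom_ext_succ (aeval (0 : Fin (n + 1) → ℂ)).toLinearMap 0 (by simp) f hf
    rw [← hfl, key' f hf]
    have h1 : eval (0 : Fin (n + 1) → ℂ) f = 0 := by
      simpa [aeval_eq_eval] using h0
    rw [h1, zero_mul]
  -- `φ ∘ g ∘ π` is the functional `f ↦ φ (l⁻¹ f)`, which kills the kernel of `π`
  · intro f hf hf0
    have h1 := hom_ext_succ (φ ∘ₗ g ∘ₗ π.toLinearMap)
      ((LinearMap.mulRight ℂ (Φ (l ^ (j + 1)))) ∘ₗ (aeval x).toLinearMap) (by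
        intro i p hp
        have h2 := hx' i ⟨π p, hmem _ p hp⟩
        rw [← hΦ' (π p) (hmem _ p hp), key' p hp] at h2
        simp only [T, LinearMap.comp_apply, LinearMap.mulLeft_apply,
          Submodule.subtype_apply] at h2
        simp only [LinearMap.comp_apply, LinearMap.mulRight_apply, AlgHom.toLinearMap_apply,
          map_mul, aeval_X]
        rw [h2]
        simp [aeval_eq_eval, mul_assoc]) f hf
    simp only [LinearMap.comp_apply, LinearMap.mulRight_apply, AlgHom.toLinearMap_apply, hf0,
      map_zero] at h1
    rcases mul_eq_zero.1 h1.symm with h | h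
    · simpa [aeval_eq_eval] using h
    · exact absurd h hc

/-! ### The Hilbert function in degrees `k` and `k + 1` -/

/-- **consequence of Macaulay–Gotzmann.** Let `I ⊆ ℂ[x_0,…,x_n]` be a
homogeneous ideal and `k` a positive integer.  If `h_I(k) ≤ k` then
`h_I(k+1) ≤ h_I(k)`.  If moreover the linear system `I_{k+1}` is base point free
(the degree-`(k+1)` forms in `I` have no common zero in `ℙⁿ`), then
`h_I(k+1) < h_I(k)` or `h_I(k) = 0`. -/
theorem macaulay_gotzmann_consequence
    (n : ℕ) (I : Ideal (S n))
    (hI : ∀ f ∈ I, ∀ m : ℕ, homogeneousComponent m f ∈ I)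
    (k : ℕ) (hk : 0 < k) (h : hilb I k ≤ k) :
    hilb I (k + 1) ≤ hilb I k ∧
    ((∀ x : Fin (n + 1) → ℂ, x ≠ 0 →
        ∃ g ∈ I, g.IsHomogeneous (k + 1) ∧ eval x g ≠ 0) →
      hilb I (k + 1) < hilb I k ∨ hilb I k = 0) := by
  obtain ⟨j, rfl⟩ : ∃ j, k = j + 1 := ⟨k - 1, by omega⟩
  let π : S n →ₐ[ℂ] S n ⧸ I := Ideal.Quotient.mkₐ ℂ I
  let L : Submodule ℂ (S n ⧸ I) := (homogeneousSubmodule (Fin (n + 1)) ℂ 1).map π.toLinearMap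
  have hL : ∀ a, (homogeneousSubmodule (Fin (n + 1)) ℂ a).map π.toLinearMap = L ^ a := fun a => by
    rw [← homogeneousSubmodule_one_pow, Submodule.map_pow]
  have hh : ∀ a, hilb I a = finrank ℂ ↥(L ^ a) := fun a => by
    rw [← hL a]; rfl
  have hfin : ∀ a, FiniteDimensional ℂ ↥(L ^ a) := fun a => by
    rw [← hL a]
    exact Module.Finite.iff_fg.2 ((homogeneousSubmodule_fg _ _ a).map _)
  rw [hh] at h
  obtain ⟨l, hl, hlj⟩ := exists_span_mul_pow_eq L j h
  have hlj' : Submodule.span ℂ {l} * L ^ (j + 1) = L ^ (j + 2) := span_mul_pow_succ L hlj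
  have hle : finrank ℂ ↥(L ^ (j + 2)) ≤ finrank ℂ ↥(L ^ (j + 1)) := by
    have : L ^ (j + 2) = (L ^ (j + 1)).map (LinearMap.mulLeft ℂ l) := by
      rw [← hlj']
      ext y
      simp [Submodule.mem_span_singleton_mul]
    rw [this]
    exact Submodule.finrank_map_le _ _
  rw [hh, hh]
  refine ⟨hle, fun hbpf => ?_⟩
  by_contra! hcon
  obtain ⟨x, hx, hx0⟩ := exists_base_point π L hL j l hl hlj (le_antisymm hle hcon.1)
    (Nat.pos_of_ne_zero hcon.2)
  obtain ⟨g, hgI, hg, hgx⟩ := hbpf x hx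
  exact hgx (hx0 g hg (Ideal.Quotient.eq_zero_iff_mem.2 hgI))
end
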